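/- The set U consists of 3^N − 2^N pairwise orthogonal nonzero product vectors, and it is unextendible: every product vector ψ ∈ H satisfying ⟨ψ, u⟩ = 0 for all u ∈ U is the zero vector. (Hence U is an unextendible product basis in (ℂ^3)^{⊗N} of size 3^N − 2^N.) -/

import Mathlib

/-!
Read the coordinates cyclically. A pair `(K, b)` with `K` even is the same thing as an arbitrary
cyclic Boolean word `s` (the sides): `K` is the set of positions where `s i ≠ s (i - 1)`, and every
such set is even (`card_flips_even`, `flips_side`, `side_flips`). The cube of `s` has `i`-th
component `{s i}`, enlarged by the middle symbol `1` exactly when `s i ≠ s (i - 1)`. Every vector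
`v ≠ (1, …, 1)` lies in exactly one cube: a coordinate `v i ≠ 1` prescribes `s i`, and a coordinate
`v i = 1` forces `s i = !s (i - 1)` (`exists_compat`, `compat_unique`). As `N` is odd, `(1, …, 1)`
lies in no cube, since this would force an odd number of flips (`compat_ne_one`).

A sign vector on a cube can be encoded by the point of the cube having a `1` exactly at the minus
signs, so `U` consists of the stopper and one state for each `v ≠ (1, …, 1)` with some `v i = 1`
(`setU_eq`). There are `3 ^ N - 2 ^ N - 1` such points. Inner products of product vectors factor
over the coordinates, which gives orthogonality, and orthogonality makes the parametrization
injective.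

For unextendibility let `ψ = ∏ F i` be orthogonal to `U`, with no `F i` zero. The key fact `edge`
says: if `F (i - 1)` does not vanish at an outer symbol `c ∈ {0, 2}`, then `F i` takes equal values
at `1` and at the outer symbol opposite to `c`. Orthogonality to the stopper gives `i` with
`∑ t, F i t = 0`, so `F i` is nonzero at some outer symbol. By `edge` this property passes from each
coordinate to the next, hence holds everywhere. Applying `edge` at `i` itself, the zero sum makes
both `F i 0` and `F i 2` nonzero, so `edge` makes `F (i + 1)` a nonzero constant, then `F (i + 2)`,
and cyclically `F i` too, against `∑ t, F i t = 0`.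
-/

open scoped BigOperators

namespace SNL

/-- `side N K b i` is `false` if the `i`-th component (0-based) of the subcube `P_K`
(`b = false` for `C`, `b = true` for `D`) is of "low" type (`{0}` or `{0,1}`),
and `true` if it is of "high" type (`{2}` or `{1,2}`), following the recursive
definition: the first component is low for `C` and high for `D`, and the type flips
from component `i` to `i+1` exactly when coordinate `i+1` belongs to `K`. -/
def side (N : ℕ) (K : Finset (Fin N)) (b : Bool) : ℕ → Bool
  | 0 => b
  | i + 1 => Bool.xor (side N K b i) (decide ((i + 1) ∈ K.image Fin.val))

/-- The `i`-th component of the subcube `C_K` (`b = false`) or `D_K` (`b = true`). -/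
def comp (N : ℕ) (K : Finset (Fin N)) (b : Bool) (i : Fin N) : Finset (Fin 3) :=
  if i ∈ K then (if side N K b i.val then {1, 2} else {0, 1})
  else (if side N K b i.val then {2} else {0})

/-- The subcube `C_K` (`b = false`) or `D_K` (`b = true`) as a set of vectors. -/
def cube (N : ℕ) (K : Finset (Fin N)) (b : Bool) : Set (Fin N → Fin 3) :=
  {v | ∀ i, v i ∈ comp N K b i}

/-- The central subcube `B₀ = {1} × ⋯ × {1}`. -/
def B0 (N : ℕ) : Set (Fin N → Fin 3) := {v | ∀ i, v i = 1}

/-- The family `B` consisting of `B₀` together with `C_K`, `D_K` for all even `K`. -/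
def family (N : ℕ) : Set (Set (Fin N → Fin 3)) :=
  {B0 N} ∪ {S | ∃ K b, Even K.card ∧ S = cube N K b}

/-- The sign `±1` attached to a Boolean sign vector (`true ↦ +1`, `false ↦ -1`). -/
def sgn (N : ℕ) (ε : Fin N → Bool) (i : Fin N) : ℂ := if ε i then 1 else -1

/-- The local factor `g_i` of the product state `|P_K; ε⟩`. -/
def gfun (N : ℕ) (K : Finset (Fin N)) (b : Bool) (ε : Fin N → Bool) (i : Fin N) :
    Fin 3 → ℂ :=
  if i ∈ K then
    (if side N K b i.val then (fun t => if t = 1 then 1 else if t = 2 then sgn N ε i else 0)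
     else (fun t => if t = 0 then 1 else if t = 1 then sgn N ε i else 0))
  else
    (if side N K b i.val then (fun t => if t = 2 then 1 else 0)
     else (fun t => if t = 0 then 1 else 0))

/-- The product state `|P_K; ε⟩` as a function `Z₃^N → ℂ`. -/
def prodState (N : ℕ) (K : Finset (Fin N)) (b : Bool) (ε : Fin N → Bool) :
    (Fin N → Fin 3) → ℂ :=
  fun v => ∏ i, gfun N K b ε i (v i)

/-- The inner product on `H = (Z₃^N → ℂ)`. -/
noncomputable def innerH (N : ℕ) (ψ φ : (Fin N → Fin 3) → ℂ) : ℂ :=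
  ∑ v, (starRingEnd ℂ) (ψ v) * φ v

/-- The state `|B₀⟩`, the indicator function of the all-ones vector. -/
def B0state (N : ℕ) : (Fin N → Fin 3) → ℂ :=
  fun v => if v = (fun _ => 1) then 1 else 0

/-- A product vector in `H`. -/
def IsProdVec (N : ℕ) (ψ : (Fin N → Fin 3) → ℂ) : Prop :=
  ∃ f : Fin N → Fin 3 → ℂ, ∀ v, ψ v = ∏ i, f i (v i)

/-- The stopper state `|S⟩ = (|0⟩+|1⟩+|2⟩)^{⊗N}`, i.e. the constant function 1. -/
def stateS (N : ℕ) : (Fin N → Fin 3) → ℂ := fun _ => 1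

/-- The orthogonal product set `O` of the `3^N - 1` states `|P_K; ε⟩`. -/
def setO (N : ℕ) : Set ((Fin N → Fin 3) → ℂ) :=
  {ψ | ∃ K b ε, Even K.card ∧ ψ = prodState N K b ε}

/-- The unextendible product basis `U`. -/
def setU (N : ℕ) : Set ((Fin N → Fin 3) → ℂ) :=
  {stateS N} ∪
    {ψ | ∃ K b ε, Even K.card ∧ (∃ i ∈ K, ε i = false) ∧ ψ = prodState N K b ε}

/-- Restriction of a vector to the coordinates other than `m`. -/
def res (N : ℕ) (m : Fin N) (v : Fin N → Fin 3) : {i : Fin N // i ≠ m} → Fin 3 :=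
  fun j => v j.1

/-- The operator `I_m ⊗ E` on `H`, where `E` is a matrix acting on the joint party
of all subsystems except `m`. -/
noncomputable def opIE (N : ℕ) (m : Fin N)
    (E : Matrix ({i : Fin N // i ≠ m} → Fin 3) ({i : Fin N // i ≠ m} → Fin 3) ℂ)
    (ψ : (Fin N → Fin 3) → ℂ) : (Fin N → Fin 3) → ℂ :=
  fun v => ∑ v' : Fin N → Fin 3,
    if v' m = v m then E (res N m v) (res N m v') * ψ v' else 0

end SNL

namespace SNL

/-! ### Cyclic words -/

open scoped Fin.CommRing in
/-- Induction around the cycle. -/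
lemma cyc {n : ℕ} (P : Fin (n + 1) → Prop) (i₀ : Fin (n + 1)) (h0 : P i₀)
    (h : ∀ i, P (i - 1) → P i) (i : Fin (n + 1)) : P i := by
  have key : ∀ k : ℕ, P (i₀ + (k : Fin (n + 1))) := by
    intro k
    induction k with
    | zero => simpa using h0
    | succ k ih =>
      apply h
      have : i₀ + ((k + 1 : ℕ) : Fin (n + 1)) - 1 = i₀ + (k : Fin (n + 1)) := by
        push_cast; abel
      rwa [this]
  have := key (i - i₀).val
  simpa using this

/-- The positions at which a cyclic word changes. -/
def flips {n : ℕ} (s : Fin (n + 1) → Bool) : Finset (Fin (n + 1)) :=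
  Finset.univ.filter fun i => s i ≠ s (i - 1)

lemma mem_flips {n : ℕ} {s : Fin (n + 1) → Bool} {i : Fin (n + 1)} :
    i ∈ flips s ↔ s i ≠ s (i - 1) := by simp [flips]

/-- A cyclic word changes an even number of times. -/
lemma card_flips_even {n : ℕ} (s : Fin (n + 1) → Bool) : Even (flips s).card := by
  let g : Bool → ℤ := fun b => if b then 1 else -1
  -- Each `g (s i)` occurs twice in `∏ i, g (s i) * g (s (i - 1))`, whose factors are `-1` at flips.
  have h1 : ∏ i, (g (s i) * g (s (i - 1))) = (-1) ^ (flips s).card := by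
    rw [flips, Finset.card_filter, ← Finset.prod_pow_eq_pow_sum]
    refine Finset.prod_congr rfl fun i _ => ?_
    cases s i <;> cases s (i - 1) <;> simp [g]
  have h2 : ∏ i, (g (s i) * g (s (i - 1))) = 1 := by
    have h3 : ∏ i, g (s (i - 1)) = ∏ i, g (s i) :=
      Equiv.prod_comp (Equiv.subRight (1 : Fin (n + 1))) (fun i => g (s i))
    rw [Finset.prod_mul_distrib, h3, ← Finset.prod_mul_distrib]
    refine Finset.prod_eq_one fun i _ => ?_
    cases s i <;> simp [g]
  rw [h2] at h1
  exact (neg_one_pow_eq_one_iff_even (by norm_num)).1 h1.symm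

lemma succ_sub_one {n : ℕ} (k : ℕ) (hk : k + 1 < n + 1) :
    (⟨k + 1, hk⟩ : Fin (n + 1)) - 1 = ⟨k, by omega⟩ := by
  apply Fin.ext
  rw [Fin.val_sub_one_of_ne_zero (by simp [Fin.ext_iff])]
  simp

lemma side_succ {n : ℕ} (K : Finset (Fin (n + 1))) (b : Bool) (k : ℕ) (hk : k + 1 < n + 1) :
    side (n + 1) K b (k + 1) = Bool.xor (side (n + 1) K b k) (decide (⟨k + 1, hk⟩ ∈ K)) := by
  rw [side]
  congr 2
  simp only [Finset.mem_image, eq_iff_iff]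
  constructor
  · rintro ⟨a, ha, h⟩
    rwa [show (⟨k + 1, hk⟩ : Fin (n + 1)) = a from Fin.ext h.symm]
  · intro h
    exact ⟨_, h, rfl⟩

lemma side_flips {n : ℕ} (s : Fin (n + 1) → Bool) (i : Fin (n + 1)) :
    side (n + 1) (flips s) (s 0) i.val = s i := by
  obtain ⟨k, hk⟩ := i
  induction k with
  | zero => rfl
  | succ k ih =>
    have ih := ih (by omega)
    simp only at ih ⊢
    rw [side_succ _ _ k hk, ih]
    simp only [mem_flips, succ_sub_one]
    cases s ⟨k, _⟩ <;> cases s ⟨k + 1, hk⟩ <;> simp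

/-- Away from position `0` this is the recursion for `side`; membership of `0` is then determined by
the parity of `K`. -/
lemma flips_side {n : ℕ} (K : Finset (Fin (n + 1))) (hK : Even K.card) (b : Bool) :
    flips (fun i => side (n + 1) K b i.val) = K := by
  set L := flips (fun i => side (n + 1) K b i.val) with hL
  have hL2 : Even L.card := card_flips_even _
  have hne : ∀ i : Fin (n + 1), i ≠ 0 → (i ∈ L ↔ i ∈ K) := by
    rintro ⟨_ | k, hk⟩ hi
    · exact absurd rfl hi
    · rw [hL, mem_flips, succ_sub_one]
      simp only
      rw [side_succ _ _ k hk]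
      cases side (n + 1) K b k <;> simp
  have herase : L.erase 0 = K.erase 0 := by
    ext i
    by_cases hi : i = 0
    · simp [hi]
    · simp [hi, hne i hi]
  have h0 : (0 : Fin (n + 1)) ∈ L ↔ (0 : Fin (n + 1)) ∈ K := by
    have hc := congrArg Finset.card herase
    rw [Finset.card_erase_eq_ite, Finset.card_erase_eq_ite] at hc
    obtain ⟨a, ha⟩ := hK
    obtain ⟨c, hc'⟩ := hL2
    by_cases h1 : (0 : Fin (n + 1)) ∈ L <;> by_cases h2 : (0 : Fin (n + 1)) ∈ K
    · simp [h1, h2]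
    · have := Finset.card_pos.2 ⟨_, h1⟩
      simp only [h1, h2, if_true, if_false] at hc
      omega
    · have := Finset.card_pos.2 ⟨_, h2⟩
      simp only [h1, h2, if_true, if_false] at hc
      omega
    · simp [h1, h2]
  ext i
  by_cases hi : i = 0
  · rw [hi, h0]
  · exact hne i hi

/-! ### The partition into cubes -/

/-- The outer symbol of a side: `0` for low (`false`), `2` for high (`true`). -/
def outer (q : Bool) : Fin 3 := if q then 2 else 0

lemma outer_ne_one (q : Bool) : outer q ≠ 1 := by cases q <;> decide

lemma outer_inj {p q : Bool} (h : outer p = outer q) : p = q := by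
  revert h; cases p <;> cases q <;> decide

/-- `t` belongs to the component of a cube with side `q` whose previous side is `p`. -/
def InComp (p q : Bool) (t : Fin 3) : Prop := t = outer q ∨ (t = 1 ∧ q ≠ p)

/-- `v` lies in the cube with sides `s`. -/
def Compat {n : ℕ} (v : Fin (n + 1) → Fin 3) (s : Fin (n + 1) → Bool) : Prop :=
  ∀ i, InComp (s (i - 1)) (s i) (v i)

/-- For odd length the all-ones vector lies in no cube. -/
lemma compat_ne_one {n : ℕ} (hodd : Odd (n + 1)) {v : Fin (n + 1) → Fin 3}
    {s : Fin (n + 1) → Bool} (h : Compat v s) : ∃ i, v i ≠ 1 := by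
  by_contra! hv
  have hf : flips s = Finset.univ := by
    ext i
    simp only [mem_flips, Finset.mem_univ, iff_true]
    rcases h i with h1 | h1
    · exact absurd (h1.symm.trans (hv i)) (outer_ne_one _)
    · exact h1.2
  have he := card_flips_even s
  rw [hf, Finset.card_univ, Fintype.card_fin] at he
  exact (Nat.not_even_iff_odd.2 hodd) he

lemma compat_unique {n : ℕ} (hodd : Odd (n + 1)) {v : Fin (n + 1) → Fin 3}
    {s s' : Fin (n + 1) → Bool} (h : Compat v s) (h' : Compat v s') : s = s' := by
  obtain ⟨i₀, hi₀⟩ := compat_ne_one hodd h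
  funext i
  have out : ∀ i, v i ≠ 1 → s i = s' i := by
    intro i hi
    rcases h i with h1 | h1
    · rcases h' i with h2 | h2
      · exact outer_inj (h1.symm.trans h2)
      · exact absurd h2.1 hi
    · exact absurd h1.1 hi
  refine cyc (fun i => s i = s' i) i₀ (out _ hi₀) (fun i hi => ?_) i
  by_cases hv : v i = 1
  · rcases h i with h1 | h1
    · exact absurd (h1.symm.trans hv) (outer_ne_one _)
    · rcases h' i with h2 | h2
      · exact absurd (h2.symm.trans hv) (outer_ne_one _)
      · have a := h1.2
        have b := h2.2
        rw [hi] at a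
        revert a b
        cases s i <;> cases s' i <;> cases s' (i - 1) <;> simp
  · exact out i hv

open scoped Fin.CommRing in
lemma exists_compat {n : ℕ} {v : Fin (n + 1) → Fin 3} (h : ∃ i, v i ≠ 1) :
    ∃ s, Compat v s := by
  obtain ⟨i₀, hi₀⟩ := h
  -- `w k` is the side at position `i₀ + k`.
  let w : ℕ → Bool := fun k => Nat.rec (decide (v i₀ = 2))
    (fun k c => if v (i₀ + ((k + 1 : ℕ) : Fin (n + 1))) = 1 then !c
      else decide (v (i₀ + ((k + 1 : ℕ) : Fin (n + 1))) = 2)) k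
  have typ : ∀ t : Fin 3, t ≠ 1 → t = outer (decide (t = 2)) := by decide
  refine ⟨fun i => w (i - i₀).val, fun i => ?_⟩
  by_cases hi : i = i₀
  · subst hi
    left
    simpa [w] using typ _ hi₀
  · have hv : (i - i₀).val = (i - 1 - i₀).val + 1 := by
      have h0 : i - i₀ ≠ 0 := sub_ne_zero.2 hi
      have h1 := Fin.val_sub_one_of_ne_zero h0
      have h2 : i - 1 - i₀ = i - i₀ - 1 := by abel
      have h3 : (i - i₀).val ≠ 0 := fun h => h0 (Fin.ext h)
      rw [h2, h1]
      omega
    have hi' : i₀ + (((i - 1 - i₀).val + 1 : ℕ) : Fin (n + 1)) = i := by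
      rw [← hv]; simp
    have hw : w (i - i₀).val = if v i = 1 then !(w (i - 1 - i₀).val)
        else decide (v i = 2) := by
      rw [hv]
      change (if v (i₀ + (((i - 1 - i₀).val + 1 : ℕ) : Fin (n + 1))) = 1 then _ else _) = _
      rw [hi']
    simp only [hw]
    by_cases h1 : v i = 1
    · right
      simp [h1]
    · left
      rw [if_neg h1]
      exact typ _ h1

/-! ### The states as products of local factors -/

/-- The local factor on a component with previous side `p`, side `q` and sign `e`
(`true` for plus); the sign is irrelevant when `p = q`. -/
def loc (p q e : Bool) : Fin 3 → ℂ :=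
  if q ≠ p then
    (if q then (fun t => if t = 1 then 1 else if t = 2 then (if e then 1 else -1) else 0)
     else (fun t => if t = 0 then 1 else if t = 1 then (if e then 1 else -1) else 0))
  else (if q then (fun t => if t = 2 then 1 else 0) else (fun t => if t = 0 then 1 else 0))

/-- The product state on the cube with sides `s`. -/
def st {n : ℕ} (s ε : Fin (n + 1) → Bool) : (Fin (n + 1) → Fin 3) → ℂ :=
  fun v => ∏ i, loc (s (i - 1)) (s i) (ε i) (v i)

lemma prodState_flips {n : ℕ} (s ε : Fin (n + 1) → Bool) :
    prodState (n + 1) (flips s) (s 0) ε = st s ε := by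
  funext v
  refine Finset.prod_congr rfl fun i _ => ?_
  simp only [gfun, loc, side_flips, mem_flips, sgn]

lemma mem_setU {n : ℕ} (u : (Fin (n + 1) → Fin 3) → ℂ) :
    u ∈ setU (n + 1) ↔ u = stateS (n + 1) ∨
      ∃ s ε, (∃ i, s i ≠ s (i - 1) ∧ ε i = false) ∧ u = st s ε := by
  simp only [setU, Set.mem_union, Set.mem_singleton_iff, Set.mem_ofPred_eq]
  refine or_congr Iff.rfl ⟨?_, ?_⟩
  · rintro ⟨K, b, ε, hK, ⟨i, hi, hε⟩, rfl⟩
    have hf := flips_side K hK b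
    refine ⟨fun i => side (n + 1) K b i.val, ε, ⟨i, ?_, hε⟩, ?_⟩
    · rw [← hf] at hi
      exact mem_flips.1 hi
    · rw [← prodState_flips, hf]
      rfl
  · rintro ⟨s, ε, ⟨i, hi, hε⟩, rfl⟩
    exact ⟨flips s, s 0, ε, card_flips_even s, ⟨i, mem_flips.2 hi, hε⟩,
      (prodState_flips s ε).symm⟩

lemma inner_prod {N : ℕ} (f g : Fin N → Fin 3 → ℂ) :
    innerH N (fun v => ∏ i, f i (v i)) (fun v => ∏ i, g i (v i)) =
      ∏ i, ∑ t, (starRingEnd ℂ) (f i t) * g i t := by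
  rw [Finset.prod_univ_sum, Fintype.piFinset_univ, innerH]
  refine Finset.sum_congr rfl fun v _ => ?_
  rw [map_prod, Finset.prod_mul_distrib]

lemma stateS_eq (N : ℕ) : stateS N = fun v => ∏ i, (fun _ _ => 1 : Fin N → Fin 3 → ℂ) i (v i) := by
  funext v
  simp [stateS]

lemma loc_ne_zero {p q e : Bool} {t : Fin 3} (h : loc p q e t ≠ 0) : InComp p q t := by
  revert h
  cases p <;> cases q <;> cases e <;> fin_cases t <;> simp [loc, InComp, outer]

lemma loc_self (p q e : Bool) : ∑ t, (starRingEnd ℂ) (loc p q e t) * loc p q e t ≠ 0 := by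
  cases p <;> cases q <;> cases e <;> simp [loc, Fin.sum_univ_three]

lemma loc_signs {p q e e' : Bool} (hpq : q ≠ p) (he : e ≠ e') :
    ∑ t, (starRingEnd ℂ) (loc p q e t) * loc p q e' t = 0 := by
  revert hpq he
  cases p <;> cases q <;> cases e <;> cases e' <;> simp [loc, Fin.sum_univ_three]

lemma loc_stop {p q : Bool} (hpq : q ≠ p) : ∑ t, loc p q false t = 0 := by
  revert hpq
  cases p <;> cases q <;> simp [loc, Fin.sum_univ_three]

lemma innerH_comm {N : ℕ} (ψ φ : (Fin N → Fin 3) → ℂ) :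
    innerH N φ ψ = (starRingEnd ℂ) (innerH N ψ φ) := by
  simp [innerH, mul_comm]

lemma inner_st_self {n : ℕ} (s ε : Fin (n + 1) → Bool) :
    innerH (n + 1) (st s ε) (st s ε) ≠ 0 := by
  unfold st
  rw [inner_prod (fun i => loc (s (i - 1)) (s i) (ε i)) (fun i => loc (s (i - 1)) (s i) (ε i))]
  exact Finset.prod_ne_zero_iff.2 fun i _ => loc_self _ _ _

lemma inner_S_self (N : ℕ) : innerH N (stateS N) (stateS N) ≠ 0 := by
  simp [innerH, stateS]

lemma inner_S_st {n : ℕ} {s ε : Fin (n + 1) → Bool} (h : ∃ i, s i ≠ s (i - 1) ∧ ε i = false) :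
    innerH (n + 1) (stateS (n + 1)) (st s ε) = 0 := by
  obtain ⟨i, hi, hε⟩ := h
  unfold st
  rw [stateS_eq, inner_prod (fun _ _ => 1) (fun i => loc (s (i - 1)) (s i) (ε i))]
  refine Finset.prod_eq_zero (Finset.mem_univ i) ?_
  simpa [hε] using loc_stop hi

/-! ### Parametrization by the points of the cubes -/

open Classical in
/-- The sides of the cube containing `v` (a junk word for `v = (1, …, 1)`). -/
noncomputable def word {n : ℕ} (v : Fin (n + 1) → Fin 3) : Fin (n + 1) → Bool :=
  if h : ∃ s, Compat v s then h.choose else fun _ => false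

lemma word_spec {n : ℕ} {v : Fin (n + 1) → Fin 3} (h : ∃ i, v i ≠ 1) : Compat v (word v) := by
  have h' := exists_compat h
  rw [word, dif_pos h']
  exact h'.choose_spec

/-- The state on the cube of `v` with minus signs at the coordinates where `v i = 1`. -/
noncomputable def vst {n : ℕ} (v : Fin (n + 1) → Fin 3) : (Fin (n + 1) → Fin 3) → ℂ :=
  st (word v) fun i => decide (v i ≠ 1)

/-- The points indexing the members of `U` other than the stopper. -/
def pts (n : ℕ) : Finset (Fin (n + 1) → Fin 3) :=
  Finset.univ.filter fun v => (∃ i, v i ≠ 1) ∧ ∃ i, v i = 1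

lemma vst_flip {n : ℕ} {v : Fin (n + 1) → Fin 3} (hv : v ∈ pts n) :
    ∃ i, word v i ≠ word v (i - 1) ∧ decide (v i ≠ 1) = false := by
  simp only [pts, Finset.mem_filter, Finset.mem_univ, true_and] at hv
  obtain ⟨h, i, hi⟩ := hv
  refine ⟨i, ?_, by simp [hi]⟩
  rcases word_spec h i with h1 | h1
  · exact absurd (h1.symm.trans hi) (outer_ne_one _)
  · exact h1.2

lemma setU_eq {n : ℕ} (hodd : Odd (n + 1)) :
    setU (n + 1) = insert (stateS (n + 1)) (vst '' (pts n : Set (Fin (n + 1) → Fin 3))) := by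
  ext u
  rw [mem_setU, Set.mem_insert_iff]
  refine or_congr Iff.rfl ⟨?_, ?_⟩
  · rintro ⟨s, ε, ⟨i, hi, hε⟩, rfl⟩
    let v : Fin (n + 1) → Fin 3 := fun i => if s i ≠ s (i - 1) ∧ ε i = false then 1 else outer (s i)
    have hc : Compat v s := by
      intro i
      by_cases h : s i ≠ s (i - 1) ∧ ε i = false
      · right
        exact ⟨if_pos h, h.1⟩
      · left
        exact if_neg h
    have hne := compat_ne_one hodd hc
    have hw : word v = s := compat_unique hodd (word_spec hne) hc
    refine ⟨v, ?_, ?_⟩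
    · simp only [pts, Finset.coe_filter, Finset.mem_univ, true_and, Set.mem_ofPred_eq]
      exact ⟨hne, i, if_pos ⟨hi, hε⟩⟩
    · rw [vst, hw]
      funext x
      refine Finset.prod_congr rfl fun j _ => ?_
      by_cases h : s j = s (j - 1)
      · simp [loc, h]
      · congr 1
        have := outer_ne_one (s j)
        cases hj : ε j <;> simp [v, h, hj, this]
  · rintro ⟨v, hv, rfl⟩
    exact ⟨word v, _, vst_flip hv, rfl⟩

lemma vst_orth {n : ℕ} (hodd : Odd (n + 1)) {v w : Fin (n + 1) → Fin 3}
    (hv : v ∈ pts n) (hw : w ∈ pts n) (hvw : v ≠ w) : innerH (n + 1) (vst v) (vst w) = 0 := by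
  simp only [pts, Finset.mem_filter, Finset.mem_univ, true_and] at hv hw
  have cv := word_spec hv.1
  have cw := word_spec hw.1
  unfold vst st
  rw [inner_prod (fun i => loc (word v (i - 1)) (word v i) (decide (v i ≠ 1)))
    (fun i => loc (word w (i - 1)) (word w i) (decide (w i ≠ 1)))]
  rw [Finset.prod_eq_zero_iff]
  by_cases hs : word v = word w
  · obtain ⟨i, hi⟩ := Function.ne_iff.1 hvw
    refine ⟨i, Finset.mem_univ _, ?_⟩
    rw [← hs] at cw ⊢
    have hflip : word v i ≠ word v (i - 1) := by
      rcases cv i with h1 | h1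
      · rcases cw i with h2 | h2
        · exact absurd (h1.trans h2.symm) hi
        · exact h2.2
      · exact h1.2
    refine loc_signs hflip ?_
    rcases cv i with h1 | h1 <;> rcases cw i with h2 | h2
    · exact absurd (h1.trans h2.symm) hi
    · simp [h1, h2.1, outer_ne_one]
    · simp [h2, h1.1, outer_ne_one]
    · exact absurd (h1.1.trans h2.1.symm) hi
    -- If no factor vanished, the two cubes would have a common point.
  · by_contra! hcon
    have : ∀ i, ∃ t, InComp (word v (i - 1)) (word v i) t ∧
        InComp (word w (i - 1)) (word w i) t := by
      intro i
      obtain ⟨t, -, ht⟩ := Finset.exists_ne_zero_of_sum_ne_zero (hcon i (Finset.mem_univ _))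
      have ht1 : loc (word v (i - 1)) (word v i) (decide (v i ≠ 1)) t ≠ 0 :=
        fun h => left_ne_zero_of_mul ht (by rw [h, map_zero])
      exact ⟨t, loc_ne_zero ht1, loc_ne_zero (right_ne_zero_of_mul ht)⟩
    choose x hx using this
    exact hs (compat_unique hodd (fun i => (hx i).1) (fun i => (hx i).2))

lemma card_pts (n : ℕ) : (pts n).card + 1 + 2 ^ (n + 1) = 3 ^ (n + 1) := by
  have h1 : ({fun _ => 1} : Finset (Fin (n + 1) → Fin 3)).card = 1 := Finset.card_singleton _
  have h2 : (Fintype.piFinset (fun _ : Fin (n + 1) => ({0, 2} : Finset (Fin 3)))).card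
      = 2 ^ (n + 1) := by
    rw [Fintype.card_piFinset]
    simp
  have h3 : (Finset.univ : Finset (Fin (n + 1) → Fin 3)).card = 3 ^ (n + 1) := by
    simp
  have hd : ∀ t : Fin 3, t ∈ ({0, 2} : Finset (Fin 3)) ↔ t ≠ 1 := by decide
  rw [← h2, ← h3]
  refine (congrArg (fun k => (pts n).card + k + _) h1).symm.trans ?_
  rw [← Finset.card_union_of_disjoint, ← Finset.card_union_of_disjoint]
  · congr 1
    ext v
    simp only [pts, Finset.mem_union, Finset.mem_filter, Finset.mem_univ, true_and,
      Finset.mem_singleton, Fintype.mem_piFinset, hd, iff_true, funext_iff]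
    by_cases ha : ∀ i, v i = 1
    · exact Or.inl (Or.inr ha)
    · by_cases hb : ∀ i, v i ≠ 1
      · exact Or.inr hb
      · push Not at ha hb
        exact Or.inl (Or.inl ⟨ha, hb⟩)
  · rw [Finset.disjoint_left]
    intro v hv hv'
    simp only [pts, Finset.mem_union, Finset.mem_filter, Finset.mem_univ, true_and,
      Finset.mem_singleton, Fintype.mem_piFinset, hd] at hv hv'
    rcases hv with ⟨-, i, hi⟩ | rfl
    · exact hv' i hi
    · exact hv' 0 rfl
  · rw [Finset.disjoint_left]
    intro v hv hv'
    simp only [pts, Finset.mem_filter, Finset.mem_univ, true_and, Finset.mem_singleton] at hv hv'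
    obtain ⟨⟨i, hi⟩, -⟩ := hv
    exact hi (by rw [hv'])

lemma S_ne_vst {n : ℕ} {v : Fin (n + 1) → Fin 3} (hv : v ∈ pts n) : stateS (n + 1) ≠ vst v := by
  intro h
  have h0 : innerH (n + 1) (stateS (n + 1)) (vst v) = 0 := inner_S_st (vst_flip hv)
  rw [← h] at h0
  exact inner_S_self _ h0

lemma ncard_setU {n : ℕ} (hodd : Odd (n + 1)) :
    (setU (n + 1)).ncard = 3 ^ (n + 1) - 2 ^ (n + 1) := by
  have hinj : Set.InjOn vst (pts n : Set (Fin (n + 1) → Fin 3)) := by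
    intro v hv w hw h
    by_contra hvw
    have h0 := vst_orth hodd hv hw hvw
    rw [← h] at h0
    exact inner_st_self _ _ h0
  rw [setU_eq hodd, Set.ncard_insert_of_notMem _ ((Finset.finite_toSet _).image _),
    hinj.ncard_image, Set.ncard_coe_finset]
  · have := card_pts n
    omega
  · rintro ⟨v, hv, h⟩
    exact S_ne_vst hv h.symm

/-! ### Unextendibility -/

/-- The two choices of sign cannot both kill a local functional that is nonzero somewhere on the
component. -/
lemma exists_sign (F : Fin 3 → ℂ) {p q : Bool} {x : Fin 3} (hx : InComp p q x) (hF : F x ≠ 0) :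
    ∃ e, ∑ t, F t * loc p q e t ≠ 0 := by
  by_contra! h
  have h1 := h true
  have h2 := h false
  apply hF
  clear hF h
  revert hx h1 h2
  cases p <;> cases q <;> simp only [InComp, outer, loc, Fin.sum_univ_three] <;>
    rintro (rfl | ⟨rfl, hne⟩) h1 h2 <;> simp_all <;>
    first
    | linear_combination (h1 + h2) / 2
    | linear_combination (h1 - h2) / 2

/-- An outer symbol `c` in the support at `i - 1` forces `F i` to agree at `1` and at the symbol
opposite to `c`: these two form the component at `i` of a cube whose other factors are made nonzero
by a choice of signs, while the minus sign at `i` gives their difference. -/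
lemma edge {n : ℕ} (hn : 1 ≤ n) (F : Fin (n + 1) → Fin 3 → ℂ) (hF : ∀ i, ∃ t, F i t ≠ 0)
    (H : ∀ s ε : Fin (n + 1) → Bool, (∃ i, s i ≠ s (i - 1) ∧ ε i = false) →
      ∏ i, ∑ t, F i t * loc (s (i - 1)) (s i) (ε i) t = 0)
    (i : Fin (n + 1)) (c : Bool) (hc : F (i - 1) (outer c) ≠ 0) :
    F i 1 = F i (outer !c) := by
  choose x₀ hx₀ using hF
  have hne : i - 1 ≠ i := by
    intro h
    have h1 : (1 : Fin (n + 1)) = 0 := by simpa using h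
    have h2 := congrArg Fin.val h1
    rw [Fin.val_one', Fin.val_zero, Nat.mod_eq_of_lt (by omega)] at h2
    omega
  -- A point with `c` before a `1` at `i`, chosen in the support of `F` away from `i`.
  let x : Fin (n + 1) → Fin 3 := Function.update (Function.update x₀ (i - 1) (outer c)) i 1
  have hxi : x i = 1 := by simp [x]
  have hxp : x (i - 1) = outer c := by simp [x, hne]
  have hxF : ∀ j, j ≠ i → F j (x j) ≠ 0 := by
    intro j hj
    by_cases hj' : j = i - 1
    · rw [hj', hxp]
      exact hc
    · have : x j = x₀ j := by simp [x, hj, hj']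
      rw [this]
      exact hx₀ j
  obtain ⟨s, hs⟩ := exists_compat (v := x) ⟨i - 1, by rw [hxp]; exact outer_ne_one c⟩
  have hsp : s (i - 1) = c := by
    rcases hs (i - 1) with h | h
    · exact outer_inj (h.symm.trans hxp)
    · exact absurd (hxp.symm.trans h.1) (outer_ne_one c)
  have hsi : s i ≠ s (i - 1) := by
    rcases hs i with h | h
    · exact absurd (h.symm.trans hxi) (outer_ne_one _)
    · exact h.2
  have hε : ∀ j, ∃ e : Bool, (j = i → e = false) ∧
      (j ≠ i → ∑ t, F j t * loc (s (j - 1)) (s j) e t ≠ 0) := by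
    intro j
    by_cases hj : j = i
    · exact ⟨false, fun _ => rfl, fun h => absurd hj h⟩
    · obtain ⟨e, he⟩ := exists_sign (F j) (hs j) (hxF j hj)
      exact ⟨e, fun h => absurd h hj, fun _ => he⟩
  choose ε hε1 hε2 using hε
  obtain ⟨j, -, hj⟩ := Finset.prod_eq_zero_iff.1 (H s ε ⟨i, hsi, hε1 i rfl⟩)
  have hji : j = i := by
    by_contra h
    exact hε2 j h hj
  subst hji
  have hsj : s j = !c := by
    rw [hsp] at hsi
    revert hsi
    cases s j <;> cases c <;> simp
  rw [hε1 j rfl, hsp, hsj] at hj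
  revert hj
  cases c <;> simp [loc, outer, Fin.sum_univ_three] <;> intro hj
  · linear_combination hj
  · linear_combination -hj

/-- A product functional with nonzero factors cannot annihilate `U`; the factors `F i` are the
conjugates of those of `ψ`. -/
lemma unext {n : ℕ} (hn : 1 ≤ n) (F : Fin (n + 1) → Fin 3 → ℂ) (hF : ∀ i, ∃ t, F i t ≠ 0)
    (H : ∀ s ε : Fin (n + 1) → Bool, (∃ i, s i ≠ s (i - 1) ∧ ε i = false) →
      ∏ i, ∑ t, F i t * loc (s (i - 1)) (s i) (ε i) t = 0)
    (HS : ∏ i, ∑ t, F i t = 0) : False := by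
  have E := edge hn F hF H
  obtain ⟨i, -, hi⟩ := Finset.prod_eq_zero_iff.1 HS
  rw [Fin.sum_univ_three] at hi
  have nz : ∀ j, F j 0 = 0 → F j 1 = 0 → F j 2 = 0 → False := by
    intro j h0 h1 h2
    obtain ⟨t, ht⟩ := hF j
    fin_cases t
    · exact ht h0
    · exact ht h1
    · exact ht h2
  have eF : ∀ j, F (j - 1) 0 ≠ 0 → F j 1 = F j 2 := fun j h => E j false h
  have eT : ∀ j, F (j - 1) 2 ≠ 0 → F j 1 = F j 0 := fun j h => E j true h
  have hout : ∀ j, F j 0 ≠ 0 ∨ F j 2 ≠ 0 := by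
    refine cyc (fun j => F j 0 ≠ 0 ∨ F j 2 ≠ 0) i ?_ ?_
    · by_contra! h
      rw [h.1, h.2] at hi
      exact nz i h.1 (by simpa using hi) h.2
    · intro j hj
      by_contra! h
      rcases hj with hj | hj
      · exact nz j h.1 ((eF j hj).trans h.2) h.2
      · exact nz j h.1 ((eT j hj).trans h.1) h.2
  have hboth : F i 0 ≠ 0 ∧ F i 2 ≠ 0 := by
    rcases hout (i - 1) with h | h
    · have h1 := eF i h
      constructor <;> intro h2
      · have h3 : F i 2 = 0 := by linear_combination hi / 2 - h2 / 2 - h1 / 2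
        exact nz i h2 (h1.trans h3) h3
      · exact nz i (by linear_combination hi - h1 - 2 * h2) (h1.trans h2) h2
    · have h1 := eT i h
      constructor <;> intro h2
      · exact nz i h2 (h1.trans h2) (by linear_combination hi - h1 - 2 * h2)
      · have h3 : F i 0 = 0 := by linear_combination hi / 2 - h2 / 2 - h1 / 2
        exact nz i h3 (h1.trans h3) h2
  have hall : ∀ j, F j 0 ≠ 0 ∧ F j 2 ≠ 0 := by
    refine cyc (fun j => F j 0 ≠ 0 ∧ F j 2 ≠ 0) i hboth ?_
    intro j hj
    have a := eF j hj.1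
    have b := eT j hj.2
    constructor <;> intro h
    · exact nz j h (b.trans h) (a.symm.trans (b.trans h))
    · exact nz j (b.symm.trans (a.trans h)) (a.trans h) h
  have a := eF i (hall (i - 1)).1
  have b := eT i (hall (i - 1)).2
  exact hboth.1 (by linear_combination hi / 3 + a / 3 - 2 * b / 3)

/-- The set `U` consists of `3^N - 2^N` pairwise orthogonal nonzero product
vectors, and it is unextendible: every product vector orthogonal to all of `U`
is zero.  Hence `U` is an unextendible product basis in `(ℂ³)^{⊗N}`. -/
theorem upb_three (N : ℕ) (hodd : Odd N) (hN : 3 ≤ N) :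
    ((setU N).ncard = 3 ^ N - 2 ^ N) ∧
    (∀ u ∈ setU N, IsProdVec N u ∧ u ≠ 0) ∧
    (∀ u ∈ setU N, ∀ w ∈ setU N, u ≠ w → innerH N u w = 0) ∧
    (∀ ψ : (Fin N → Fin 3) → ℂ, IsProdVec N ψ →
        (∀ u ∈ setU N, innerH N ψ u = 0) → ψ = 0) := by
  obtain ⟨n, rfl⟩ : ∃ n, N = n + 1 := ⟨N - 1, by omega⟩
  have hzero : ∀ u : (Fin (n + 1) → Fin 3) → ℂ, innerH (n + 1) u u ≠ 0 → u ≠ 0 := by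
    rintro u hu rfl
    exact hu (by simp [innerH])
  refine ⟨ncard_setU hodd, ?_, ?_, ?_⟩
  · intro u hu
    rcases (mem_setU u).1 hu with rfl | ⟨s, ε, -, rfl⟩
    · exact ⟨⟨fun _ _ => 1, fun v => congrFun (stateS_eq _) v⟩, hzero _ (inner_S_self _)⟩
    · exact ⟨⟨fun i => loc (s (i - 1)) (s i) (ε i), fun v => rfl⟩, hzero _ (inner_st_self _ _)⟩
  · intro u hu w hw huw
    rw [setU_eq hodd] at hu hw
    rcases hu with rfl | ⟨v, hv, rfl⟩ <;> rcases hw with rfl | ⟨v', hv', rfl⟩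
    · exact absurd rfl huw
    · exact inner_S_st (vst_flip hv')
    · rw [innerH_comm]
      have : innerH (n + 1) (stateS (n + 1)) (vst v) = 0 := inner_S_st (vst_flip hv)
      rw [this, map_zero]
    · exact vst_orth hodd hv hv' fun h => huw (by rw [h])
  · rintro ψ ⟨f, hf⟩ hψ
    obtain rfl : ψ = fun v => ∏ i, f i (v i) := funext hf
    by_contra hne
    have hF : ∀ i, ∃ t, (starRingEnd ℂ) (f i t) ≠ 0 := by
      intro i
      by_contra! h
      apply hne
      funext v
      exact Finset.prod_eq_zero (Finset.mem_univ i) (by simpa using h (v i))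
    refine unext (by omega) (fun i t => (starRingEnd ℂ) (f i t)) hF ?_ ?_
    · intro s ε h
      have := hψ (st s ε) ((mem_setU _).2 (Or.inr ⟨s, ε, h, rfl⟩))
      unfold st at this
      rwa [inner_prod f (fun i => loc (s (i - 1)) (s i) (ε i))] at this
    · have := hψ (stateS (n + 1)) ((mem_setU _).2 (Or.inl rfl))
      rw [stateS_eq, inner_prod f (fun _ _ => 1)] at this
      simpa using this

end SNL
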